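/- Let V be a nonempty finite set and f : 2^V → ℝ a set function that is normalized (f(∅) = 0), nonnegative, monotone (A ⊆ B implies f(A) ≤ f(B)), and submodular (for all A ⊆ B ⊆ V and v ∈ V \ B, f(A ∪ {v}) − f(A) ≥ f(B ∪ {v}) − f(B)). Let k ≤ |V| and let A_G be obtained by the greedy procedure: A₀ = ∅ and A_{t+1} = A_t ∪ {a_t}, where a_t ∈ V \ A_t maximizes f(A_t ∪ {a}) over a ∈ V \ A_t, with A_G = A_k. Then f(A_G) ≥ (1 − 1/e) · f(A*), where A* is any subset of V with |A*| = k maximizing f among subsets of size k, and e is Euler's number. -/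

import Mathlib

/-!
By submodularity, joining a set `T` to the current greedy set increases `f` by at most the sum of
the marginal gains of the elements of `T`, each of which is at most the gain of the next greedy
step. Hence every step closes at least a `1 / #T` fraction of the remaining gap to `f T`, so after
`n` steps the gap has shrunk by the factor `(1 - 1 / #T) ^ n ≤ exp (-n / #T)`.
-/

open Finset

section Marginal

variable {V M : Type*} [DecidableEq V]

/-- Submodularity of a set function, in its diminishing-returns form: the marginal gain of an
element outside a set is at most its marginal gain over any subset. -/
def IsSubmodular [Sub M] [LE M] (f : Finset V → M) : Prop :=
  ∀ A B : Finset V, A ⊆ B → ∀ v ∉ B, f (insert v B) - f B ≤ f (insert v A) - f A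

/-- A greedy run for maximizing `f`: each of the first `n` steps of the sequence `A` inserts a new
element with the largest resulting value of `f`. The starting set `A 0` is arbitrary, and the
sequence is unconstrained after step `n`. -/
def IsGreedyRun [LE M] (f : Finset V → M) (A : ℕ → Finset V) (n : ℕ) : Prop :=
  ∀ t < n, ∃ a ∉ A t, A (t + 1) = insert a (A t) ∧
    ∀ b ∉ A t, f (insert b (A t)) ≤ f (insert a (A t))

theorem IsGreedyRun.apply_insert_le [Preorder M] {f : Finset V → M} {A : ℕ → Finset V} {n t : ℕ}
    (hA : IsGreedyRun f A n) (hf : Monotone f) (ht : t < n) (b : V) :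
    f (insert b (A t)) ≤ f (A (t + 1)) := by
  obtain ⟨a, -, hstep, hmax⟩ := hA t ht
  rw [hstep]
  by_cases hb : b ∈ A t
  · rw [insert_eq_of_mem hb]
    exact hf (subset_insert a (A t))
  · exact hmax b hb

variable [AddCommGroup M] [PartialOrder M] [IsOrderedAddMonoid M] {f : Finset V → M}

theorem IsSubmodular.apply_union_sub_le_sum (hf : IsSubmodular f) (S T : Finset V) :
    f (S ∪ T) - f S ≤ ∑ b ∈ T, (f (insert b S) - f S) := by
  induction T using Finset.induction_on with
  | empty => simp
  | insert b T hbT ih =>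
    rw [sum_insert hbT, union_insert]
    by_cases hbS : b ∈ S
    · simpa [hbS] using ih
    · have hb : b ∉ S ∪ T := by simp [hbS, hbT]
      calc f (insert b (S ∪ T)) - f S
          = (f (insert b (S ∪ T)) - f (S ∪ T)) + (f (S ∪ T) - f S) :=
            (sub_add_sub_cancel _ _ _).symm
        _ ≤ (f (insert b S) - f S) + ∑ b ∈ T, (f (insert b S) - f S) :=
            add_le_add (hf S (S ∪ T) subset_union_left b hb) ih

theorem IsGreedyRun.gap_le_card_nsmul {A : ℕ → Finset V} {n t : ℕ} (hA : IsGreedyRun f A n)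
    (hmono : Monotone f) (hsub : IsSubmodular f) (ht : t < n) (T : Finset V) :
    f T - f (A t) ≤ #T • (f (A (t + 1)) - f (A t)) :=
  calc f T - f (A t)
      ≤ f (A t ∪ T) - f (A t) := sub_le_sub_right (hmono subset_union_right) _
    _ ≤ ∑ b ∈ T, (f (insert b (A t)) - f (A t)) := hsub.apply_union_sub_le_sum (A t) T
    _ ≤ #T • (f (A (t + 1)) - f (A t)) :=
        sum_le_card_nsmul T _ _ fun b _ ↦ sub_le_sub_right (hA.apply_insert_le hmono ht b) _

end Marginal

section Contraction

variable {V R : Type*} [DecidableEq V] [Field R] [LinearOrder R] [IsStrictOrderedRing R]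

theorem IsGreedyRun.gap_succ_le {f : Finset V → R} {A : ℕ → Finset V} {n t : ℕ}
    (hA : IsGreedyRun f A n) (hmono : Monotone f) (hsub : IsSubmodular f) (ht : t < n)
    {T : Finset V} (hT : T.Nonempty) :
    f T - f (A (t + 1)) ≤ (1 - 1 / #T) * (f T - f (A t)) := by
  have hcard : (0 : R) < #T := by exact_mod_cast hT.card_pos
  have hgain : (f T - f (A t)) / #T ≤ f (A (t + 1)) - f (A t) := by
    rw [div_le_iff₀' hcard, ← nsmul_eq_mul]
    exact hA.gap_le_card_nsmul hmono hsub ht T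
  calc f T - f (A (t + 1))
      = (f T - f (A t)) - (f (A (t + 1)) - f (A t)) := by ring
    _ ≤ (f T - f (A t)) - (f T - f (A t)) / #T := sub_le_sub_left hgain _
    _ = (1 - 1 / #T) * (f T - f (A t)) := by ring

end Contraction

theorem one_sub_one_div_pow_le_exp_neg {m n : ℕ} (hm : 0 < m) {c : ℝ} (hc : c * m ≤ n) :
    (1 - 1 / (m : ℝ)) ^ n ≤ Real.exp (-c) := by
  have hm' : (1 : ℝ) ≤ m := by exact_mod_cast hm
  have hbase : 0 ≤ 1 - 1 / (m : ℝ) := sub_nonneg.2 (div_le_self zero_le_one hm')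
  have hcn : c ≤ n / m := (le_div_iff₀ (by positivity)).2 hc
  calc (1 - 1 / (m : ℝ)) ^ n
      ≤ Real.exp (-(1 / m)) ^ n := pow_le_pow_left₀ hbase (Real.one_sub_le_exp_neg _) n
    _ = Real.exp (-(n / m)) := by rw [← Real.exp_nat_mul]; ring_nf
    _ ≤ Real.exp (-c) := Real.exp_le_exp.2 (neg_le_neg hcn)

section Guarantee

variable {V : Type*} [DecidableEq V] {f : Finset V → ℝ} {A : ℕ → Finset V} {n : ℕ}

theorem IsGreedyRun.gap_le_pow_mul (hA : IsGreedyRun f A n) (hmono : Monotone f)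
    (hsub : IsSubmodular f) {T : Finset V} (hT : T.Nonempty) :
    f T - f (A n) ≤ (1 - 1 / #T) ^ n * (f T - f (A 0)) := by
  have hcard : (1 : ℝ) ≤ #T := by exact_mod_cast hT.card_pos
  exact le_geom (u := fun t ↦ f T - f (A t)) (sub_nonneg.2 (div_le_self zero_le_one hcard)) n
    fun _ ht ↦ hA.gap_succ_le hmono hsub ht hT

-- The usual guarantee `1 - exp (-n / #T)` is the case `c = n / #T`; multiplying out the
-- denominator makes the statement meaningful for `T = ∅` too.
theorem stmt8_general (hmono : Monotone f) (hsub : IsSubmodular f) (hA : IsGreedyRun f A n)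
    {T : Finset V} (hT : f (A 0) ≤ f T) {c : ℝ} (hc : c * #T ≤ n) :
    (1 - Real.exp (-c)) * (f T - f (A 0)) ≤ f (A n) - f (A 0) := by
  suffices hgap : f T - f (A n) ≤ Real.exp (-c) * (f T - f (A 0)) by linarith
  have hinit : 0 ≤ f T - f (A 0) := sub_nonneg.2 hT
  rcases T.eq_empty_or_nonempty with rfl | hne
  · exact (sub_nonpos.2 (hmono (empty_subset (A n)))).trans (by positivity)
  · exact (hA.gap_le_pow_mul hmono hsub hne).trans
      (mul_le_mul_of_nonneg_right (one_sub_one_div_pow_le_exp_neg hne.card_pos hc) hinit)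

end Guarantee

/-- (Nemhauser–Wolsey–Fisher) For a normalized, nonnegative, monotone and
submodular set function `f` on a nonempty finite ground set `V`, the greedy procedure
(`A 0 = ∅`, at each of `k` steps insert an element maximizing the function value) produces a set
`A k` with `f (A k) ≥ (1 - 1/e) f A*`, where `A*` is an optimal subset of cardinality `k`. -/
theorem stmt8 {V : Type*} [Fintype V] [DecidableEq V] [Nonempty V]
    (f : Finset V → ℝ)
    (hnorm : f ∅ = 0)
    (hnonneg : ∀ A : Finset V, 0 ≤ f A)
    (hmono : ∀ A B : Finset V, A ⊆ B → f A ≤ f B)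
    (hsub : ∀ A B : Finset V, A ⊆ B → ∀ v ∉ B,
      f (insert v B) - f B ≤ f (insert v A) - f A)
    (k : ℕ) (hk : k ≤ Fintype.card V)
    (A : ℕ → Finset V) (hA0 : A 0 = ∅)
    (hgreedy : ∀ t < k, ∃ a ∉ A t, A (t + 1) = insert a (A t) ∧
      ∀ b ∉ A t, f (insert b (A t)) ≤ f (insert a (A t)))
    (Astar : Finset V) (hcard : Astar.card = k)
    (hopt : ∀ B : Finset V, B.card = k → f B ≤ f Astar) :
    (1 - 1 / Real.exp 1) * f Astar ≤ f (A k) := by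
  simpa [hA0, hnorm, Real.exp_neg] using stmt8_general (fun A B ↦ hmono A B) hsub hgreedy
    (hmono _ Astar (hA0 ▸ empty_subset Astar)) (c := 1) (by simp [hcard])
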